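/- arXiv:1404.5365 — 2 statements merged into one kernel-verified Lean document; each statement's English description precedes it below -/
import Mathlib

section
/- There exists a C¹-smooth convex function F : ℝ³ → ℝ such that for i = 1, 2, 3 and all u ∈ ℝ³, ∂F/∂u_i(u) = a_i(e^{u₁}, e^{u₂}, e^{u₃}), and such that F(u + (k, k, k)) = F(u) + kπ for all u ∈ ℝ³ and all k ∈ ℝ. -/
/-- The inner angle, opposite the edge of length `x i`, of the generalized Euclidean
triangle of edge lengths `x 0, x 1, x 2` (clamped arccos convention). -/
noncomputable def ang (i : Fin 3) (x : Fin 3 → ℝ) : ℝ :=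
  Real.arccos (((x (i + 1)) ^ 2 + (x (i + 2)) ^ 2 - (x i) ^ 2) / (2 * x (i + 1) * x (i + 2)))

namespace RonkinAngles

open Real Set Filter Topology

/-- Angle opposite to `x`. -/
noncomputable def A (x y z : ℝ) : ℝ := arccos ((y ^ 2 + z ^ 2 - x ^ 2) / (2 * y * z))

/-- Primitive of log sin. -/
noncomputable def L (x : ℝ) : ℝ := ∫ t in (0 : ℝ)..x, log (sin t)

lemma L_cont : Continuous L := by
  apply intervalIntegral.continuous_primitive
  intro a b
  exact intervalIntegrable_log_sin

lemma L_deriv {x : ℝ} (h0 : 0 < x) (h1 : x < π) : HasDerivAt L (log (sin x)) x := by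
  have hs : sin x ≠ 0 := (sin_pos_of_pos_of_lt_pi h0 h1).ne'
  apply intervalIntegral.integral_hasDerivAt_right
  · exact intervalIntegrable_log_sin
  · exact (Measurable.stronglyMeasurable (by fun_prop)).stronglyMeasurableAtFilter
  · exact (continuous_sin.continuousAt).log hs

lemma cos_arg_tri {x y z : ℝ} (hx : 0 < x) (hy : 0 < y) (hz : 0 < z)
    (h1 : x < y + z) (h2 : y < z + x) (h3 : z < x + y) :
    -1 < (y ^ 2 + z ^ 2 - x ^ 2) / (2 * y * z) ∧ (y ^ 2 + z ^ 2 - x ^ 2) / (2 * y * z) < 1 := by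
  have : 0 < 2 * y * z := by positivity
  rw [lt_div_iff₀ this, div_lt_iff₀ this]
  constructor
  · nlinarith
  · nlinarith [mul_pos (sub_pos.2 h2) (sub_pos.2 h3)]

lemma sin_A {x y z : ℝ} (hx : 0 < x) (hy : 0 < y) (hz : 0 < z) :
    sin (A x y z) = (√((x + y + z) * (y + z - x) * (z + x - y) * (x + y - z)) / (2 * x * y * z)) * x := by
  rw [A, sin_arccos]
  have : 1 - ((y ^ 2 + z ^ 2 - x ^ 2) / (2 * y * z)) ^ 2
      = ((x + y + z) * (y + z - x) * (z + x - y) * (x + y - z)) / (2 * y * z) ^ 2 := by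
    field_simp
    ring
  rw [this, sqrt_div' _ (by positivity), sqrt_sq (by positivity)]
  field_simp

lemma A_mem {x y z : ℝ} (hx : 0 < x) (hy : 0 < y) (hz : 0 < z)
    (h1 : x < y + z) (h2 : y < z + x) (h3 : z < x + y) : 0 < A x y z ∧ A x y z < π := by
  obtain ⟨h, h'⟩ := cos_arg_tri hx hy hz h1 h2 h3
  refine ⟨arccos_pos.2 h', ?_⟩
  refine lt_of_le_of_ne (arccos_le_pi _) ?_
  intro h4
  rw [A, arccos_eq_pi] at h4
  linarith

lemma cos_A {x y z : ℝ} (hx : 0 < x) (hy : 0 < y) (hz : 0 < z)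
    (h1 : x < y + z) (h2 : y < z + x) (h3 : z < x + y) :
    cos (A x y z) = (y ^ 2 + z ^ 2 - x ^ 2) / (2 * y * z) := by
  obtain ⟨h, h'⟩ := cos_arg_tri hx hy hz h1 h2 h3
  exact cos_arccos h.le h'.le

lemma A_sum_tri {x y z : ℝ} (hx : 0 < x) (hy : 0 < y) (hz : 0 < z)
    (h1 : x < y + z) (h2 : y < z + x) (h3 : z < x + y) :
    A x y z + A y z x + A z x y = π := by
  have ha := A_mem hx hy hz h1 h2 h3
  have hb := A_mem hy hz hx h2 h3 h1
  have hc := A_mem hz hx hy h3 h1 h2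
  have ca := cos_A hx hy hz h1 h2 h3
  have cb := cos_A hy hz hx h2 h3 h1
  have cc := cos_A hz hx hy h3 h1 h2
  have sa := sin_A hx hy hz
  have sb := sin_A hy hz hx
  have hS : 0 ≤ (x + y + z) * (y + z - x) * (z + x - y) * (x + y - z) := by
    have := sub_pos.2 h1
    have := sub_pos.2 h2
    have := sub_pos.2 h3
    positivity
  have hle : A x y z ≤ π - A y z x := by
    rw [← strictAntiOn_cos.le_iff_ge (a := π - A y z x) (b := A x y z)
      ⟨by linarith, by linarith⟩ ⟨by linarith, by linarith⟩, cos_pi_sub, ca, cb]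
    have : (y ^ 2 + z ^ 2 - x ^ 2) / (2 * y * z) + (z ^ 2 + x ^ 2 - y ^ 2) / (2 * z * x)
      = (x + y) * (z + y - x) * (z + x - y) / (2 * x * y * z) := by
      field_simp
      ring
    have h4 : 0 ≤ (x + y) * (z + y - x) * (z + x - y) / (2 * x * y * z) := by
      have : 0 < z + y - x := by linarith
      have := sub_pos.2 h2
      positivity
    linarith
  have hcos : cos (A x y z + A y z x) = cos (π - A z x y) := by
    rw [cos_add, cos_pi_sub, ca, cb, cc, sa, sb]
    have e : (y + z + x) * (z + x - y) * (x + y - z) * (y + z - x) =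
      (x + y + z) * (y + z - x) * (z + x - y) * (x + y - z) := by ring
    rw [e]
    have := mul_self_sqrt hS
    set S := √((x + y + z) * (y + z - x) * (z + x - y) * (x + y - z))
    field_simp
    rw [pow_two S, this]
    ring
  have := injOn_cos ⟨by linarith, by linarith⟩ ⟨by linarith, by linarith⟩ hcos
  linarith

lemma A_deg {x y z : ℝ} (hx : 0 < x) (hy : 0 < y) (hz : 0 < z) (h : y + z ≤ x) :
    A x y z = π ∧ A y z x = 0 ∧ A z x y = 0 := by
  refine ⟨?_, ?_, ?_⟩
  · rw [A, arccos_eq_pi, div_le_iff₀ (by positivity)]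
    nlinarith
  · rw [A, arccos_eq_zero, le_div_iff₀ (by positivity)]
    nlinarith
  · rw [A, arccos_eq_zero, le_div_iff₀ (by positivity)]
    nlinarith

lemma A_nonneg (x y z : ℝ) : 0 ≤ A x y z := arccos_nonneg _

lemma A_sum {x y z : ℝ} (hx : 0 < x) (hy : 0 < y) (hz : 0 < z) :
    A x y z + A y z x + A z x y = π := by
  by_cases h1 : x < y + z
  · by_cases h2 : y < z + x
    · by_cases h3 : z < x + y
      · exact A_sum_tri hx hy hz h1 h2 h3
      · obtain ⟨h, h', h''⟩ := A_deg hz hx hy (not_lt.1 h3)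
        rw [h, h', h'']; ring
    · obtain ⟨h, h', h''⟩ := A_deg hy hz hx (not_lt.1 h2)
      rw [h, h', h'']; ring
  · obtain ⟨h, h', h''⟩ := A_deg hx hy hz (not_lt.1 h1)
    rw [h, h', h'']; ring

lemma cot_form {a b c d e f : ℝ} (ha : 0 < a) (hb : 0 < b) (hc : 0 < c) (hs : a + b + c = π)
    (hd : d + e + f = 0) :
    0 ≤ d * (cos a * d / sin a) + e * (cos b * e / sin b) + f * (cos c * f / sin c) := by
  have sa := sin_pos_of_pos_of_lt_pi ha (by linarith)
  have sb := sin_pos_of_pos_of_lt_pi hb (by linarith)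
  have sc := sin_pos_of_pos_of_lt_pi hc (by linarith)
  have ec : c = π - (a + b) := by linarith
  have h1 : sin c = sin a * cos b + cos a * sin b := by rw [ec, sin_pi_sub, sin_add]
  have h2 : cos c = sin a * sin b - cos a * cos b := by rw [ec, cos_pi_sub, cos_add]; ring
  have ef : f = -(d + e) := by linarith
  have pa := sin_sq_add_cos_sq a
  have pb := sin_sq_add_cos_sq b
  have key : d * (cos a * d / sin a) + e * (cos b * e / sin b) + f * (cos c * f / sin c)
      = (d ^ 2 * cos a * sin b * sin c + e ^ 2 * cos b * sin a * sin c
        + f ^ 2 * cos c * sin a * sin b) / (sin a * sin b * sin c) := by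
    field_simp
  have h3 : cos a * sin c + cos c * sin a = sin b := by
    rw [h1, h2]; linear_combination sin b * pa
  have h4 : cos b * sin c + cos c * sin b = sin a := by
    rw [h1, h2]; linear_combination sin a * pb
  have pc := sin_sq_add_cos_sq c
  have num : d ^ 2 * cos a * sin b * sin c + e ^ 2 * cos b * sin a * sin c
        + f ^ 2 * cos c * sin a * sin b
      = (d * sin b + e * sin a * cos c) ^ 2 + (e * sin a * sin c) ^ 2 := by
    rw [ef]
    linear_combination d ^ 2 * sin b * h3 + e ^ 2 * sin a * h4 - e ^ 2 * sin a ^ 2 * pc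
  rw [key, num]
  positivity

lemma main_ineq {a b c p q r : ℝ} (ha : 0 < a) (hb : 0 < b) (hc : 0 < c) (hs : a + b + c = π)
    (hp : 0 ≤ p) (hq : 0 ≤ q) (hr : 0 ≤ r) (ht : p + q + r = π) :
    (p - a) * log (sin a) + (q - b) * log (sin b) + (r - c) * log (sin c)
      ≤ (L p + L q + L r) - (L a + L b + L c) := by
  have pos : ∀ {a p t : ℝ}, 0 < a → 0 ≤ p → 0 ≤ t → t < 1 → 0 < a + t * (p - a) := by
    intro a p t h1 h2 h3 h4
    nlinarith [mul_nonneg h3 h2, mul_pos (sub_pos.2 h4) h1]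
  have small : ∀ t : ℝ, (a + t * (p - a)) + (b + t * (q - b)) + (c + t * (r - c)) = π := by
    intro t
    linear_combination (1 - t) * hs + t * ht
  have lin : ∀ (a p t : ℝ), HasDerivAt (fun t => a + t * (p - a)) (p - a) t := by
    intro a p t
    simpa using ((hasDerivAt_id t).mul_const (p - a)).const_add a
  set φ : ℝ → ℝ := fun t => (p - a) * log (sin (a + t * (p - a)))
    + (q - b) * log (sin (b + t * (q - b))) + (r - c) * log (sin (c + t * (r - c))) with hφ
  have dls : ∀ {a p t : ℝ}, 0 < a + t * (p - a) → a + t * (p - a) < π →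
     HasDerivAt (fun t => (p - a) * log (sin (a + t * (p - a))))
      ((p - a) * (cos (a + t * (p - a)) * (p - a) / sin (a + t * (p - a)))) t := by
    intro a p t h1 h2
    exact (((lin a p t).sin).log (sin_pos_of_pos_of_lt_pi h1 h2).ne').const_mul (p - a)
  have dφ : ∀ t, 0 ≤ t → t < 1 → ∃ y, 0 ≤ y ∧ HasDerivAt φ y t := by
    intro t h0 h1
    have h2 := pos ha hp h0 h1
    have h3 := pos hb hq h0 h1
    have h4 := pos hc hr h0 h1
    have h5 := small t
    exact ⟨_, cot_form h2 h3 h4 h5 (by linarith), ((dls h2 (by linarith)).add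
      (dls h3 (by linarith))).add (dls h4 (by linarith))⟩
  have mono : MonotoneOn φ (Ico 0 1) := by
    apply monotoneOn_of_deriv_nonneg (convex_Ico 0 1)
    · intro t ht
      obtain ⟨y, _, hy⟩ := dφ t ht.1 ht.2
      exact hy.continuousAt.continuousWithinAt
    · intro t ht
      rw [interior_Ico] at ht
      obtain ⟨y, _, hy⟩ := dφ t ht.1.le ht.2
      exact hy.differentiableAt.differentiableWithinAt
    · intro t ht
      rw [interior_Ico] at ht
      obtain ⟨y, hy0, hy⟩ := dφ t ht.1.le ht.2
      rwa [hy.deriv]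
  have dL : ∀ {a p t : ℝ}, 0 < a + t * (p - a) → a + t * (p - a) < π →
     HasDerivAt (fun t => L (a + t * (p - a))) ((p - a) * log (sin (a + t * (p - a)))) t := by
    intro a p t h1 h2
    have := (L_deriv h1 h2).comp t (lin a p t)
    rwa [mul_comm] at this
  set ψ : ℝ → ℝ := fun t => L (a + t * (p - a)) + L (b + t * (q - b)) + L (c + t * (r - c)) - t * φ 0
    with hψ
  have dψ : ∀ t, 0 ≤ t → t < 1 → HasDerivAt ψ (φ t - φ 0) t := by
    intro t h0 h1
    have h2 := pos ha hp h0 h1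
    have h3 := pos hb hq h0 h1
    have h4 := pos hc hr h0 h1
    have h5 := small t
    have := (((dL h2 (by linarith)).add
      (dL h3 (by linarith))).add (dL h4 (by linarith))).sub ((hasDerivAt_id t).mul_const (φ 0))
    rw [one_mul] at this
    exact this
  have mono2 : MonotoneOn ψ (Icc 0 1) := by
    apply monotoneOn_of_deriv_nonneg (convex_Icc 0 1)
    · have := L_cont
      apply Continuous.continuousOn
      simp only [hψ]
      fun_prop
    · intro t ht
      rw [interior_Icc] at ht
      exact (dψ t ht.1.le ht.2).differentiableAt.differentiableWithinAt
    · intro t ht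
      rw [interior_Icc] at ht
      rw [(dψ t ht.1.le ht.2).deriv, sub_nonneg]
      exact mono ⟨le_rfl, one_pos⟩ ⟨ht.1.le, ht.2⟩ ht.1.le
  have := mono2 (left_mem_Icc.2 zero_le_one) (right_mem_Icc.2 zero_le_one) zero_le_one
  simp [hψ, hφ] at this
  linarith

/-- The functional maximised by the angles. -/
noncomputable def Φ (u v w p q r : ℝ) : ℝ := p * u + q * v + r * w - (L p + L q + L r)

/-- The scalar potential. -/
noncomputable def G (u v w : ℝ) : ℝ :=
  Φ u v w (A (exp u) (exp v) (exp w)) (A (exp v) (exp w) (exp u)) (A (exp w) (exp u) (exp v))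

lemma A_cont {f g h : ℝ → ℝ} (hf : Continuous f) (hg : Continuous g) (hh : Continuous h) :
    Continuous fun s => A (exp (f s)) (exp (g s)) (exp (h s)) := by
  unfold A
  apply continuous_arccos.comp
  apply Continuous.div (by fun_prop) (by fun_prop)
  intro s
  positivity

lemma G_cont (v w : ℝ) : Continuous fun s => G s v w := by
  have := L_cont
  have h1 := A_cont continuous_id (continuous_const (y := v)) (continuous_const (y := w))
  have h2 := A_cont (continuous_const (y := v)) (continuous_const (y := w)) continuous_id
  have h3 := A_cont (continuous_const (y := w)) continuous_id (continuous_const (y := v))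
  simp only [id] at h1 h2 h3
  unfold G Φ
  fun_prop

lemma key_tri {u v w p q r : ℝ} (hp : 0 ≤ p) (hq : 0 ≤ q) (hr : 0 ≤ r) (ht : p + q + r = π)
    (h1 : exp u < exp v + exp w) (h2 : exp v < exp w + exp u) (h3 : exp w < exp u + exp v) :
    Φ u v w p q r ≤ G u v w := by
  have hx := exp_pos u
  have hy := exp_pos v
  have hz := exp_pos w
  have ha := A_mem hx hy hz h1 h2 h3
  have hb := A_mem hy hz hx h2 h3 h1
  have hc := A_mem hz hx hy h3 h1 h2
  have hs := A_sum hx hy hz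
  have key := main_ineq ha.1 hb.1 hc.1 hs hp hq hr ht
  have sa := sin_A hx hy hz
  have sb := sin_A hy hz hx
  have sc := sin_A hz hx hy
  have e : (exp v + exp w + exp u) * (exp w + exp u - exp v) * (exp u + exp v - exp w) * (exp v + exp w - exp u) =
      (exp u + exp v + exp w) * (exp v + exp w - exp u) * (exp w + exp u - exp v) * (exp u + exp v - exp w) := by ring
  have e' : (exp w + exp u + exp v) * (exp u + exp v - exp w) * (exp v + exp w - exp u) * (exp w + exp u - exp v) =
      (exp u + exp v + exp w) * (exp v + exp w - exp u) * (exp w + exp u - exp v) * (exp u + exp v - exp w) := by ring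
  have f : 2 * exp v * exp w * exp u = 2 * exp u * exp v * exp w := by ring
  have f' : 2 * exp w * exp u * exp v = 2 * exp u * exp v * exp w := by ring
  rw [e, f] at sb
  rw [e', f'] at sc
  have hK : 0 < √((exp u + exp v + exp w) * (exp v + exp w - exp u) * (exp w + exp u - exp v) * (exp u + exp v - exp w))
     / (2 * exp u * exp v * exp w) := by
    have := sub_pos.2 h1
    have := sub_pos.2 h2
    have := sub_pos.2 h3
    positivity
  generalize √((exp u + exp v + exp w) * (exp v + exp w - exp u) * (exp w + exp u - exp v) * (exp u + exp v - exp w))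
     / (2 * exp u * exp v * exp w) = K at sa sb sc hK
  rw [sa, sb, sc, log_mul hK.ne' hx.ne', log_mul hK.ne' hy.ne', log_mul hK.ne' hz.ne',
    log_exp, log_exp, log_exp] at key
  unfold G Φ
  have : (p + q + r) * log K = (A (exp u) (exp v) (exp w) + A (exp v) (exp w) (exp u)
    + A (exp w) (exp u) (exp v)) * log K := by rw [hs, ht]
  linarith

lemma key_deg {u v w p q r : ℝ} (hp : 0 ≤ p) (hq : 0 ≤ q) (hr : 0 ≤ r) (ht : p + q + r = π)
    (h : exp v + exp w ≤ exp u) : Φ u v w p q r ≤ G u v w := by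
  have hy := exp_pos v
  have hz := exp_pos w
  set s := log (exp v + exp w) with hs
  have es : exp s = exp v + exp w := exp_log (by positivity)
  have hsu : s ≤ u := by rw [← exp_le_exp, es]; exact h
  have hlim : Φ s v w p q r ≤ G s v w := by
    have c1 : Tendsto (fun t => Φ t v w p q r) (𝓝[<] s) (𝓝 (Φ s v w p q r)) := by
      have : Continuous (fun t => Φ t v w p q r) := by unfold Φ; fun_prop
      exact this.continuousAt.tendsto.mono_left nhdsWithin_le_nhds
    have c2 : Tendsto (fun t => G t v w) (𝓝[<] s) (𝓝 (G s v w)) :=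
      (G_cont v w).continuousAt.tendsto.mono_left nhdsWithin_le_nhds
    refine le_of_tendsto_of_tendsto c1 c2 ?_
    have e1 : ∀ᶠ t in 𝓝[<] s, exp v < exp w + exp t :=
      nhdsWithin_le_nhds ((by fun_prop : Continuous fun t => exp w + exp t).continuousAt.eventually
        (lt_mem_nhds (by simp only [es]; linarith)))
    have e2 : ∀ᶠ t in 𝓝[<] s, exp w < exp t + exp v :=
      nhdsWithin_le_nhds ((by fun_prop : Continuous fun t => exp t + exp v).continuousAt.eventually
        (lt_mem_nhds (by simp only [es]; linarith)))
    filter_upwards [e1, e2, self_mem_nhdsWithin] with t h1 h2 h3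
    exact key_tri hp hq hr ht (by rw [← es]; exact exp_lt_exp.2 h3) h1 h2
  obtain ⟨h1, h2, h3⟩ := A_deg (exp_pos u) hy hz h
  obtain ⟨h1', h2', h3'⟩ := A_deg (exp_pos s) hy hz es.ge
  unfold G at hlim ⊢
  rw [h1, h2, h3]
  rw [h1', h2', h3'] at hlim
  unfold Φ at hlim ⊢
  nlinarith [mul_nonneg (by linarith : 0 ≤ π - p) (sub_nonneg.2 hsu)]

lemma Φ_cyc (u v w p q r : ℝ) : Φ u v w p q r = Φ v w u q r p := by unfold Φ; ring

lemma G_cyc (u v w : ℝ) : G u v w = G v w u := by unfold G; rw [Φ_cyc]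

lemma key {u v w p q r : ℝ} (hp : 0 ≤ p) (hq : 0 ≤ q) (hr : 0 ≤ r) (ht : p + q + r = π) :
    Φ u v w p q r ≤ G u v w := by
  by_cases h1 : exp u < exp v + exp w
  · by_cases h2 : exp v < exp w + exp u
    · by_cases h3 : exp w < exp u + exp v
      · exact key_tri hp hq hr ht h1 h2 h3
      · rw [Φ_cyc, G_cyc, Φ_cyc, G_cyc]
        exact key_deg hr hp hq (by linarith) (not_lt.1 h3)
    · rw [Φ_cyc, G_cyc]
      exact key_deg hq hr hp (by linarith) (not_lt.1 h2)
  · exact key_deg hp hq hr ht (not_lt.1 h1)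

/-- The potential. -/
noncomputable def F (u : Fin 3 → ℝ) : ℝ := G (u 0) (u 1) (u 2)

/-- The angle. -/
noncomputable def g (i : Fin 3) (u : Fin 3 → ℝ) : ℝ := ang i (fun m => exp (u m))

lemma g_cont (i : Fin 3) : Continuous (g i) := by
  unfold g ang
  apply continuous_arccos.comp
  apply Continuous.div (by fun_prop) (by fun_prop)
  intro s
  positivity

lemma g0 (u : Fin 3 → ℝ) : g 0 u = A (exp (u 0)) (exp (u 1)) (exp (u 2)) := rfl
lemma g1 (u : Fin 3 → ℝ) : g 1 u = A (exp (u 1)) (exp (u 2)) (exp (u 0)) := rfl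
lemma g2 (u : Fin 3 → ℝ) : g 2 u = A (exp (u 2)) (exp (u 0)) (exp (u 1)) := rfl

lemma g_sum (u : Fin 3 → ℝ) : g 0 u + g 1 u + g 2 u = π :=
  A_sum (exp_pos _) (exp_pos _) (exp_pos _)

/-- The differential. -/
noncomputable def D (u : Fin 3 → ℝ) : (Fin 3 → ℝ) →L[ℝ] ℝ :=
  ∑ i, g i u • ContinuousLinearMap.proj (R := ℝ) (φ := fun _ : Fin 3 => ℝ) i

lemma D_apply (u v : Fin 3 → ℝ) : D u v = g 0 u * v 0 + g 1 u * v 1 + g 2 u * v 2 := by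
  simp [D, Fin.sum_univ_three]

lemma D_cont : Continuous D := by
  unfold D
  have := g_cont
  fun_prop

lemma subgrad (u v : Fin 3 → ℝ) : F u + D u (v - u) ≤ F v := by
  have h := key (u := v 0) (v := v 1) (w := v 2) (p := g 0 u) (q := g 1 u) (r := g 2 u) (A_nonneg _ _ _) (A_nonneg _ _ _)
    (A_nonneg _ _ _) (g_sum u)
  rw [D_apply]
  unfold F
  refine le_trans (le_of_eq ?_) h
  rw [G, ← g0, ← g1, ← g2]
  simp only [Φ, Pi.sub_apply]
  ring

lemma F_deriv (u : Fin 3 → ℝ) : HasFDerivAt F (D u) u := by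
  rw [hasFDerivAt_iff_isLittleO, Asymptotics.isLittleO_iff]
  intro c hc
  have : ∀ᶠ v in 𝓝 u, dist (D v) (D u) < c :=
    D_cont.continuousAt.eventually (Metric.ball_mem_nhds _ hc)
  filter_upwards [this] with v hv
  have h1 := subgrad u v
  have h2 := subgrad v u
  have h3 : D v (u - v) = - D v (v - u) := by rw [← map_neg]; congr 1; abel
  have h4 := (D v - D u).le_opNorm (v - u)
  rw [← dist_eq_norm, sub_apply] at h4
  have h5 := mul_le_mul_of_nonneg_right hv.le (norm_nonneg (v - u))
  rw [Real.norm_eq_abs] at h4 ⊢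
  rw [abs_of_nonneg (by linarith)]
  have := le_abs_self (D v (v - u) - D u (v - u))
  linarith

end RonkinAngles

open RonkinAngles in
theorem stmt1 : ∃ F : (Fin 3 → ℝ) → ℝ,
    ContDiff ℝ 1 F ∧ ConvexOn ℝ Set.univ F ∧
    (∀ u : Fin 3 → ℝ, ∀ i : Fin 3,
      fderiv ℝ F u (Pi.single i 1) = ang i (fun m => Real.exp (u m))) ∧
    (∀ u : Fin 3 → ℝ, ∀ k : ℝ, F (u + fun _ => k) = F u + k * Real.pi) := by
  have hd : fderiv ℝ RonkinAngles.F = D := funext fun u => (F_deriv u).fderiv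
  refine ⟨RonkinAngles.F, ?_, ?_, ?_, ?_⟩
  · rw [contDiff_one_iff_fderiv, hd]
    exact ⟨fun u => (F_deriv u).differentiableAt, D_cont⟩
  · refine ⟨convex_univ, ?_⟩
    intro x _ y _ a b ha hb hab
    have h1 := subgrad (a • x + b • y) x
    have h2 := subgrad (a • x + b • y) y
    set z := a • x + b • y with hz
    have h3 : a * D z (x - z) + b * D z (y - z) = 0 := by
      rw [← smul_eq_mul, ← smul_eq_mul, ← map_smul, ← map_smul, ← map_add]
      have : a • (x - z) + b • (y - z) = 0 := by
        rw [smul_sub, smul_sub, sub_add_sub_comm, ← add_smul, hab, one_smul, ← hz, sub_self]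
      rw [this, map_zero]
    have h4 := mul_le_mul_of_nonneg_left h1 ha
    have h5 := mul_le_mul_of_nonneg_left h2 hb
    have h6 : a * RonkinAngles.F z + b * RonkinAngles.F z = RonkinAngles.F z := by
      rw [← add_mul, hab, one_mul]
    simp only [smul_eq_mul]
    linarith
  · intro u i
    rw [hd, D_apply]
    fin_cases i <;> simp [g]
  · intro u k
    have h1 := subgrad u (u + fun _ => k)
    have h2 := subgrad (u + fun _ => k) u
    rw [D_apply] at h1 h2
    have e1 := congrArg (fun t => t * k) (g_sum u)
    have e2 := congrArg (fun t => t * k) (g_sum (u + fun _ => k))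
    simp only [Pi.sub_apply, Pi.add_apply] at h1 h2 e1 e2
    ring_nf at h1 h2 e1 e2 ⊢
    linarith
end

section
/- The function V(x, y, z) = Λ(x) + Λ(y) + Λ(z) is smooth and strictly concave on the open simplex {(x, y, z) ∈ ℝ³ : x, y, z > 0, x + y + z = π}, extends continuously to the closed simplex {(x, y, z) ∈ ℝ³ : x, y, z ≥ 0, x + y + z = π}, and V(x, y, z) = 0 at every point of the closed simplex where at least one of the coordinates x, y, z is 0. -/
/-- The Lobachevsky function `Λ(t) = -∫₀ᵗ log |2 sin s| ds`. -/
noncomputable def Lob (t : ℝ) : ℝ := -∫ s in (0 : ℝ)..t, Real.log |2 * Real.sin s|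

open Real Set MeasureTheory in
lemma lob_int (a b : ℝ) : IntervalIntegrable (fun s => Real.log |2 * Real.sin s|) volume a b := by
  have h : MeromorphicOn (fun s : ℝ => 2 * Real.sin s) (uIcc a b) := by
    apply AnalyticOnNhd.meromorphicOn
    intro x _
    fun_prop
  simp only [Real.log_abs]
  exact h.intervalIntegrable_log

lemma lob_cont : Continuous Lob := by
  unfold Lob
  exact (intervalIntegral.continuous_primitive lob_int 0).neg

lemma sin_ne_of_mem {t : ℝ} (h : t ∈ Set.Ioo 0 Real.pi) : Real.sin t ≠ 0 :=
  (Real.sin_pos_of_pos_of_lt_pi h.1 h.2).ne'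

lemma lob_deriv {t : ℝ} (h : t ∈ Set.Ioo 0 Real.pi) :
    HasDerivAt Lob (-Real.log (2 * Real.sin t)) t := by
  have hs := sin_ne_of_mem h
  rw [← Real.log_abs]
  refine HasDerivAt.fun_neg (f := fun t => ∫ s in (0 : ℝ)..t, Real.log |2 * Real.sin s|) ?_
  refine intervalIntegral.integral_hasDerivAt_right (lob_int 0 t) ?_ ?_
  · refine Measurable.stronglyMeasurable ?_ |>.stronglyMeasurableAtFilter
    fun_prop
  · apply ContinuousAt.log
    · fun_prop
    · simpa using hs

lemma log_deriv' {t : ℝ} (h : t ∈ Set.Ioo 0 Real.pi) :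
    HasDerivAt (fun t => -Real.log (2 * Real.sin t)) (-(Real.cos t / Real.sin t)) t := by
  have hs := sin_ne_of_mem h
  have := (((Real.hasDerivAt_sin t).const_mul 2).log (by simpa using hs)).neg
  have e : Real.cos t / Real.sin t = 2 * Real.cos t / (2 * Real.sin t) := by field_simp
  rw [e]
  exact this

lemma lob_smooth : ContDiffOn ℝ (⊤ : ℕ∞) Lob (Set.Ioo 0 Real.pi) := by
  rw [contDiffOn_infty_iff_deriv_of_isOpen isOpen_Ioo]
  refine ⟨fun t ht => (lob_deriv ht).differentiableAt.differentiableWithinAt, ?_⟩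
  have : ContDiffOn ℝ (⊤ : ℕ∞) (fun t => -Real.log (2 * Real.sin t)) (Set.Ioo 0 Real.pi) := by
    apply ContDiffOn.neg
    apply ContDiffOn.log
    · exact (contDiff_const.mul Real.contDiff_sin).contDiffOn
    · intro t ht
      simpa using sin_ne_of_mem ht
  exact this.congr fun t ht => (lob_deriv ht).deriv

lemma lob_zero : Lob 0 = 0 := by simp [Lob]

lemma lob_pi : Lob Real.pi = 0 := by
  unfold Lob
  rw [neg_eq_zero]
  have : ∫ s in (0:ℝ)..Real.pi, Real.log |2 * Real.sin s|
      = ∫ s in (0:ℝ)..Real.pi, (Real.log 2 + Real.log (Real.sin s)) := by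
    apply intervalIntegral.integral_congr_ae
    have h : ∀ᵐ s : ℝ, s ≠ Real.pi := by simp [MeasureTheory.ae_iff]
    filter_upwards [h] with s hs hm
    rw [Set.uIoc_of_le Real.pi_pos.le] at hm
    rw [Real.log_abs, Real.log_mul two_ne_zero (sin_ne_of_mem ⟨hm.1, lt_of_le_of_ne hm.2 hs⟩)]
  rw [this, intervalIntegral.integral_add (by simp) (by apply intervalIntegrable_log_sin),
    integral_log_sin_zero_pi]
  simp
  ring

lemma lob_refl (t : ℝ) : Lob t + Lob (Real.pi - t) = 0 := by
  have h1 : ∫ s in (0:ℝ)..(Real.pi - t), Real.log |2 * Real.sin s|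
      = ∫ s in t..Real.pi, Real.log |2 * Real.sin s| := by
    have := intervalIntegral.integral_comp_sub_left (a := t) (b := Real.pi)
      (fun s => Real.log |2 * Real.sin s|) Real.pi
    simp only [Real.sin_pi_sub, sub_self] at this
    exact this.symm
  have h2 := intervalIntegral.integral_add_adjacent_intervals (lob_int 0 t) (lob_int t Real.pi)
  have h3 := lob_pi
  unfold Lob at *
  rw [h1]
  linarith

lemma quad_pos (A B C p q : ℝ) (h : A * B + B * C + C * A = 1) (hAC : 0 < A + C)
    (hpq : p ≠ 0 ∨ q ≠ 0) : 0 < A * p ^ 2 + B * q ^ 2 + C * (p + q) ^ 2 := by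
  have e : (A + C) * (A * p ^ 2 + B * q ^ 2 + C * (p + q) ^ 2)
      = ((A + C) * p + C * q) ^ 2 + q ^ 2 := by
    linear_combination q ^ 2 * h
  refine pos_of_mul_pos_right (a := A + C) ?_ hAC.le
  rw [e]
  by_cases hq : q = 0
  · have hp : p ≠ 0 := by tauto
    subst hq
    have : (A + C) * p ≠ 0 := mul_ne_zero hAC.ne' hp
    simp only [mul_zero, add_zero]
    positivity
  · positivity

lemma cot_pos (x y z p q r : ℝ) (hx : 0 < x) (hy : 0 < y) (hz : 0 < z)
    (h : x + y + z = Real.pi) (hr : p + q + r = 0) (hpq : p ≠ 0 ∨ q ≠ 0) :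
    0 < Real.cos x / Real.sin x * p ^ 2 + Real.cos y / Real.sin y * q ^ 2
      + Real.cos z / Real.sin z * r ^ 2 := by
  have sx := Real.sin_pos_of_pos_of_lt_pi hx (by linarith)
  have sy := Real.sin_pos_of_pos_of_lt_pi hy (by linarith)
  have sz := Real.sin_pos_of_pos_of_lt_pi hz (by linarith)
  have hr' : r ^ 2 = (p + q) ^ 2 := by
    rw [show r = -(p + q) by linarith]; ring
  rw [hr']
  have ey : Real.sin y = Real.sin x * Real.cos z + Real.cos x * Real.sin z := by
    rw [← Real.sin_add, ← Real.sin_pi_sub y]; congr 1; linarith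
  have cy : Real.cos y = Real.sin x * Real.sin z - Real.cos x * Real.cos z := by
    have := Real.cos_add x z
    have h2 := Real.cos_pi_sub y
    rw [show Real.pi - y = x + z by linarith] at h2
    linarith
  apply quad_pos _ _ _ _ _ _ _ hpq
  · field_simp
    rw [cy, ey]
    ring
  · have : Real.cos x / Real.sin x + Real.cos z / Real.sin z
        = Real.sin y / (Real.sin x * Real.sin z) := by
      rw [ey]; field_simp; ring
    rw [this]; positivity

lemma seg_concave (x y : Fin 3 → ℝ) (hx : (∀ i, 0 < x i) ∧ x 0 + x 1 + x 2 = Real.pi)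
    (hy : (∀ i, 0 < y i) ∧ y 0 + y 1 + y 2 = Real.pi) (hxy : x ≠ y) :
    StrictConcaveOn ℝ (Set.Icc (0 : ℝ) 1) (fun s => Lob (x 0 + s * (y 0 - x 0))
      + Lob (x 1 + s * (y 1 - x 1)) + Lob (x 2 + s * (y 2 - x 2))) := by
  have hpos : ∀ s ∈ Set.Ioo (0 : ℝ) 1, ∀ i, 0 < x i + s * (y i - x i) := by
    intro s hs i
    have h1 := mul_pos (sub_pos.2 hs.2) (hx.1 i)
    have h2 := mul_pos hs.1 (hy.1 i)
    linarith
  have hsum : ∀ s : ℝ, (x 0 + s * (y 0 - x 0)) + (x 1 + s * (y 1 - x 1))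
      + (x 2 + s * (y 2 - x 2)) = Real.pi := by
    intro s
    linear_combination (1 - s) * hx.2 + s * hy.2
  have hmem : ∀ s ∈ Set.Ioo (0 : ℝ) 1, ∀ i, x i + s * (y i - x i) ∈ Set.Ioo 0 Real.pi := by
    intro s hs i
    refine ⟨hpos s hs i, ?_⟩
    have := hsum s
    have h0 := hpos s hs 0
    have h1 := hpos s hs 1
    have h2 := hpos s hs 2
    fin_cases i <;> simp <;> linarith
  have hlin : ∀ (s : ℝ) (i : Fin 3), HasDerivAt (fun s => x i + s * (y i - x i)) (y i - x i) s := by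
    intro s i
    simpa using ((hasDerivAt_id s).mul_const (y i - x i)).const_add (x i)
  apply StrictAntiOn.strictConcaveOn_of_deriv (convex_Icc 0 1)
  · have := lob_cont
    fun_prop
  rw [interior_Icc]
  have hd : ∀ s ∈ Set.Ioo (0 : ℝ) 1, ∀ i, HasDerivAt (fun s => Lob (x i + s * (y i - x i)))
      (-Real.log (2 * Real.sin (x i + s * (y i - x i))) * (y i - x i)) s := fun s hs i =>
    HasDerivAt.comp (h₂ := Lob) (h := fun s => x i + s * (y i - x i)) s
      (lob_deriv (hmem s hs i)) (hlin s i)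
  have hd2 : ∀ s ∈ Set.Ioo (0 : ℝ) 1, ∀ i, HasDerivAt
      (fun s => -Real.log (2 * Real.sin (x i + s * (y i - x i))) * (y i - x i))
      (-(Real.cos (x i + s * (y i - x i)) / Real.sin (x i + s * (y i - x i))) * (y i - x i)
        * (y i - x i)) s := fun s hs i =>
    ((log_deriv' (hmem s hs i)).comp s (hlin s i)).mul_const _
  have key : StrictAntiOn (fun s => -Real.log (2 * Real.sin (x 0 + s * (y 0 - x 0))) * (y 0 - x 0)
      + -Real.log (2 * Real.sin (x 1 + s * (y 1 - x 1))) * (y 1 - x 1)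
      + -Real.log (2 * Real.sin (x 2 + s * (y 2 - x 2))) * (y 2 - x 2)) (Set.Ioo (0 : ℝ) 1) := by
    have hdd := fun s hs => ((hd2 s hs 0).add (hd2 s hs 1)).add (hd2 s hs 2)
    apply strictAntiOn_of_deriv_neg (convex_Ioo 0 1)
    · exact fun s hs => (hdd s hs).continuousAt.continuousWithinAt
    · rw [interior_Ioo]
      intro s hs
      have e := (hdd s hs).deriv
      refine lt_of_eq_of_lt e ?_
      have := cot_pos _ _ _ (y 0 - x 0) (y 1 - x 1) (y 2 - x 2) (hpos s hs 0) (hpos s hs 1)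
        (hpos s hs 2) (hsum s) (by linarith [hx.2, hy.2]) (by
          by_contra! hc
          apply hxy
          have := hx.2
          have := hy.2
          funext i
          fin_cases i <;> simp <;> linarith)
      linarith
  exact key.congr fun s hs => (((hd s hs 0).add (hd s hs 1)).add (hd s hs 2)).deriv.symm


theorem stmt3 :
    ContDiffOn ℝ (⊤ : ℕ∞) (fun x : Fin 3 → ℝ => Lob (x 0) + Lob (x 1) + Lob (x 2))
      {x : Fin 3 → ℝ | (∀ i, 0 < x i) ∧ x 0 + x 1 + x 2 = Real.pi} ∧
    StrictConcaveOn ℝ {x : Fin 3 → ℝ | (∀ i, 0 < x i) ∧ x 0 + x 1 + x 2 = Real.pi}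
      (fun x => Lob (x 0) + Lob (x 1) + Lob (x 2)) ∧
    ContinuousOn (fun x : Fin 3 → ℝ => Lob (x 0) + Lob (x 1) + Lob (x 2))
      {x : Fin 3 → ℝ | (∀ i, 0 ≤ x i) ∧ x 0 + x 1 + x 2 = Real.pi} ∧
    ∀ x : Fin 3 → ℝ, (∀ i, 0 ≤ x i) → x 0 + x 1 + x 2 = Real.pi →
      (∃ i, x i = 0) → Lob (x 0) + Lob (x 1) + Lob (x 2) = 0 := by

  refine ⟨?_, ⟨?_, ?_⟩, ?_, ?_⟩
  · have h : ∀ i : Fin 3, ContDiffOn ℝ (⊤ : ℕ∞) (fun x : Fin 3 → ℝ => Lob (x i))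
        {x : Fin 3 → ℝ | (∀ i, 0 < x i) ∧ x 0 + x 1 + x 2 = Real.pi} := by
      intro i
      refine lob_smooth.comp (contDiff_apply ℝ ℝ i).contDiffOn ?_
      rintro x ⟨hx, hs⟩
      refine ⟨hx i, ?_⟩
      have h0 := hx 0
      have h1 := hx 1
      have h2 := hx 2
      fin_cases i <;> simp <;> linarith
    exact ((h 0).add (h 1)).add (h 2)
  · rintro x ⟨hx, hxs⟩ y ⟨hy, hys⟩ a b ha hb hab
    refine ⟨fun i => ?_, ?_⟩
    · simp only [Pi.add_apply, Pi.smul_apply, smul_eq_mul]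
      have h1 := hx i
      have h2 := hy i
      rcases ha.eq_or_lt with h | h
      · have : b = 1 := by linarith
        subst h this
        simpa using h2
      · have := mul_pos h h1
        have := mul_nonneg hb h2.le
        linarith
    · simp only [Pi.add_apply, Pi.smul_apply, smul_eq_mul]
      linear_combination a * hxs + b * hys + Real.pi * hab
  · intro x hx y hy hxy a b ha hb hab
    have := (seg_concave x y hx hy hxy).2 (x := 0) (by simp) (y := 1) (by simp) (by norm_num)
      ha hb hab
    have ea : a = 1 - b := by linarith
    have e : ∀ i, (a • x + b • y) i = x i + b * (y i - x i) := by
      intro i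
      simp only [Pi.add_apply, Pi.smul_apply, smul_eq_mul, ea]
      ring
    simp only [e]
    simpa using this
  · have := lob_cont
    fun_prop
  · rintro x hx hs ⟨i, hi⟩
    fin_cases i <;> simp at hi <;> rw [hi, lob_zero]
    · rw [show x 2 = Real.pi - x 1 by linarith, zero_add, lob_refl]
    · rw [show x 2 = Real.pi - x 0 by linarith, add_zero, lob_refl]
    · rw [show x 1 = Real.pi - x 0 by linarith, add_zero, lob_refl]
end
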